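/- For all integers d ≥ 2 and n ≥ 1 and all unit vectors α, β ∈ (ℂ^d)^{⊗n}, one has ⟨α ⊗ β| Q |α ⊗ β⟩ ≤ (3/4)^{n/2}, where Q = (P_2^{(d)})^{⊗n} is regarded (after reordering tensor factors) as an operator on ((ℂ^d)^{⊗n})_A ⊗ ((ℂ^d)^{⊗n})_B with the A side collecting the first factor of each antisymmetric pair and the B side the second. (This yields the paper's lower bound E^∞_{R,sep}(α_d) ≥ (1/2)·log₂(4/3) on the regularised relative entropy of entanglement with respect to separable states.) -/

import Mathlib

open scoped BigOperators
open Classical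
open scoped ComplexOrder

noncomputable section

/-- Partial trace over the second tensor factor:
`(ptraceSnd M) a a' = ∑ b, M (a,b) (a',b)`. -/
def ptraceSnd {α β : Type*} [Fintype β] (M : Matrix (α × β) (α × β) ℂ) : Matrix α α ℂ :=
  Matrix.of fun a a' => ∑ b : β, M (a, b) (a', b)

/-- Von Neumann entropy (in bits) of a matrix, via the eigenvalues of a Hermitian matrix
(with the convention `0 * log₂ 0 = 0`, automatic since `Real.logb 2 0 = 0`). -/
def vnEntropy {ι : Type*} [Fintype ι] [DecidableEq ι] (ρ : Matrix ι ι ℂ) : ℝ :=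
  if h : ρ.IsHermitian then -∑ i, h.eigenvalues i * Real.logb 2 (h.eigenvalues i) else 0

/-- Entanglement of formation of a bipartite (density) matrix: the infimum of the average
entropy of entanglement over all finite pure-state ensembles for `ρ`. -/
def EoF {α β : Type*} [Fintype α] [DecidableEq α] [Fintype β] [DecidableEq β]
    (ρ : Matrix (α × β) (α × β) ℂ) : ℝ :=
  sInf {E : ℝ | ∃ (k : ℕ) (p : Fin k → ℝ) (ψ : Fin k → (α × β → ℂ)),
    (∀ i, 0 ≤ p i) ∧ (∑ i, p i = 1) ∧
    (∀ i, ∑ x, Complex.normSq (ψ i x) = 1) ∧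
    (∑ i, p i • Matrix.vecMulVec (ψ i) (star (ψ i)) = ρ) ∧
    E = ∑ i, p i * vnEntropy (ptraceSnd (Matrix.vecMulVec (ψ i) (star (ψ i))))}

/-- The antisymmetric projector `P₂^{(d)} = (1/2)(𝟙 - F)` on `ℂ^d ⊗ ℂ^d`. -/
def asymProj (d : ℕ) : Matrix (Fin d × Fin d) (Fin d × Fin d) ℂ :=
  Matrix.of fun p q => (1 / 2 : ℂ) *
    ((if p.1 = q.1 ∧ p.2 = q.2 then 1 else 0) - (if p.1 = q.2 ∧ p.2 = q.1 then 1 else 0))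

/-- The antisymmetric state `α_d = P₂^{(d)} / binom(d,2)`. -/
def antisymState (d : ℕ) : Matrix (Fin d × Fin d) (Fin d × Fin d) ℂ :=
  (1 / (Nat.choose d 2 : ℂ)) • asymProj d

/-- `α_d^{⊗n}`, viewed as a bipartite state on `((ℂ^d)^{⊗n})_A ⊗ ((ℂ^d)^{⊗n})_B`
(the `n` first tensor factors grouped on the `A` side, the `n` second ones on the `B` side). -/
def alphaPow (d n : ℕ) :
    Matrix ((Fin n → Fin d) × (Fin n → Fin d)) ((Fin n → Fin d) × (Fin n → Fin d)) ℂ :=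
  Matrix.of fun p q => ∏ i : Fin n, antisymState d (p.1 i, p.2 i) (q.1 i, q.2 i)

/-- `(P₂^{(d)})^{⊗n}`, viewed as an operator on `((ℂ^d)^{⊗n})_A ⊗ ((ℂ^d)^{⊗n})_B`
(the `n` first tensor factors grouped on the `A` side, the `n` second ones on the `B` side). -/
def asymPow (d n : ℕ) :
    Matrix ((Fin n → Fin d) × (Fin n → Fin d)) ((Fin n → Fin d) × (Fin n → Fin d)) ℂ :=
  Matrix.of fun p q => ∏ i : Fin n, asymProj d (p.1 i, p.2 i) (q.1 i, q.2 i)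

/-- The antisymmetrizer `P_k^{(d)} = (1/k!) ∑_{σ ∈ S_k} sgn(σ) U_σ` on `(ℂ^d)^{⊗k}`. -/
def asymProjK (d k : ℕ) : Matrix (Fin k → Fin d) (Fin k → Fin d) ℂ :=
  Matrix.of fun f g => (1 / (Nat.factorial k) : ℂ) *
    ∑ σ : Equiv.Perm (Fin k), ((Equiv.Perm.sign σ : ℤ) : ℂ) * (if f = g ∘ σ then 1 else 0)

/-- Quantum conditional mutual information `I(A;B|E) = H(AE) + H(BE) - H(ABE) - H(E)`
(in bits) of a tripartite (density) matrix. -/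
def condMutInfo {α β γ : Type*} [Fintype α] [DecidableEq α] [Fintype β] [DecidableEq β]
    [Fintype γ] [DecidableEq γ] (ρ : Matrix ((α × β) × γ) ((α × β) × γ) ℂ) : ℝ :=
  vnEntropy (Matrix.of fun p q : α × γ => ∑ b : β, ρ ((p.1, b), p.2) ((q.1, b), q.2))
  + vnEntropy (Matrix.of fun p q : β × γ => ∑ a : α, ρ ((a, p.1), p.2) ((a, q.1), q.2))
  - vnEntropy ρ
  - vnEntropy (Matrix.of fun e e' : γ => ∑ a : α, ∑ b : β, ρ ((a, b), e) ((a, b), e'))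

/-- Squashed entanglement: `E_sq(ρ_AB) = inf (1/2) I(A;B|E)` over all finite-dimensional
extensions `ρ_ABE` of `ρ_AB`. -/
def Esq {α β : Type*} [Fintype α] [DecidableEq α] [Fintype β] [DecidableEq β]
    (ρ : Matrix (α × β) (α × β) ℂ) : ℝ :=
  sInf {x : ℝ | ∃ (m : ℕ) (σ : Matrix ((α × β) × Fin m) ((α × β) × Fin m) ℂ),
    σ.PosSemidef ∧ σ.trace = 1 ∧ ptraceSnd σ = ρ ∧ x = (1 / 2) * condMutInfo σ}

/-- The operator norm `‖·‖_∞` of a matrix, acting on Euclidean space. -/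
def opNorm {ι : Type*} [Fintype ι] [DecidableEq ι] (M : Matrix ι ι ℂ) : ℝ :=
  ‖Matrix.toEuclideanCLM (𝕜 := ℂ) M‖

/-- A bipartite (density) matrix is separable if it is a finite convex combination of
product density matrices. -/
def IsSeparableMat {α β : Type*} [Fintype α] [Fintype β]
    (σ : Matrix (α × β) (α × β) ℂ) : Prop :=
  ∃ (k : ℕ) (p : Fin k → ℝ) (ρA : Fin k → Matrix α α ℂ) (ρB : Fin k → Matrix β β ℂ),
    (∀ i, 0 ≤ p i) ∧ (∑ i, p i = 1) ∧
    (∀ i, (ρA i).PosSemidef) ∧ (∀ i, (ρA i).trace = 1) ∧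
    (∀ i, (ρB i).PosSemidef) ∧ (∀ i, (ρB i).trace = 1) ∧
    σ = ∑ i, p i • Matrix.kroneckerMap (· * ·) (ρA i) (ρB i)

/-!
Write `η = P^{⊗n} (a ⊗ b)`, where `P` is the antisymmetric projector, let `N = ‖η‖²` be the overlap
to be bounded, and let `ψ` be the coefficient matrix of `η` across the cut `A : B`.

Two copies of `η` are fixed by `Q^{⊗n}`, with `Q = P ⊗ P` acting on two copies of one antisymmetric
pair. Let `F` exchange the `A` factors of the two copies and `G` exchange the copies themselves, and
put `L = 1 + 4F`. Locally `(Q L Q)² = Q (5 + 4G)`, of norm at most `9`, and this is stable under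
tensor powers, so `⟨η ⊗ η| L^{⊗n} |η ⊗ η⟩ ≤ 3^n N²`. On the other hand `L` is a sum of terms
`T ⊗ Tᴴ`, so the left-hand side is a sum of squares `|⟨η| T_{k 1} ⊗ ⋯ ⊗ T_{k n} |η⟩|²`; keeping only
the terms coming from `4F` bounds it below by `4^n ‖ψ ψᴴ‖²`, in the Hilbert-Schmidt norm. Finally
`N = ⟨a| ψ |b̄⟩`, and two applications of the Cauchy-Schwarz inequality give `N⁴ ≤ ‖ψ ψᴴ‖²`, whence
`N² ≤ (3/4)^n`.
-/

section

open Matrix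
open scoped Kronecker

section

variable {m n : Type*} [Fintype m] [Fintype n]

lemma normSq_star_dotProduct_le (a b : m → ℂ) :
    Complex.normSq (star a ⬝ᵥ b) ≤
      (∑ i, Complex.normSq (a i)) * ∑ i, Complex.normSq (b i) := by
  have h := norm_inner_le_norm (𝕜 := ℂ) (WithLp.toLp 2 a) (WithLp.toLp 2 b)
  rw [EuclideanSpace.inner_eq_star_dotProduct, dotProduct_comm] at h
  simpa only [Complex.normSq_eq_norm_sq, mul_pow, EuclideanSpace.norm_sq_eq] using
    pow_le_pow_left₀ (norm_nonneg _) h 2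

lemma star_dotProduct_self_eq_sum_normSq (v : m → ℂ) :
    star v ⬝ᵥ v = ((∑ i, Complex.normSq (v i) : ℝ) : ℂ) := by
  simp [dotProduct, Complex.normSq_eq_conj_mul_self]

lemma sum_normSq_mulVec_le (A : Matrix m n ℂ) (v : n → ℂ) :
    ∑ i, Complex.normSq ((A *ᵥ v) i) ≤
      (∑ i, ∑ j, Complex.normSq (A i j)) * ∑ j, Complex.normSq (v j) := by
  rw [Finset.sum_mul]
  refine Finset.sum_le_sum fun i _ => ?_
  change Complex.normSq (A i ⬝ᵥ v) ≤ _
  simpa only [star_star, Pi.star_apply, RCLike.star_def, Complex.normSq_conj] using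
    normSq_star_dotProduct_le (star (A i)) v

lemma normSq_star_dotProduct_mulVec_sq_le (A : Matrix m n ℂ) (a : m → ℂ) (b : n → ℂ) :
    Complex.normSq (star a ⬝ᵥ A *ᵥ b) ^ 2 ≤
      (∑ i, ∑ j, Complex.normSq ((A * Aᴴ) i j)) *
        (∑ i, Complex.normSq (a i)) ^ 2 * (∑ j, Complex.normSq (b j)) ^ 2 := by
  set s := ∑ j, Complex.normSq ((Aᴴ *ᵥ a) j)
  have adjoint (w : n → ℂ) : star a ⬝ᵥ A *ᵥ w = star (Aᴴ *ᵥ a) ⬝ᵥ w := by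
    rw [star_mulVec, conjTranspose_conjTranspose, dotProduct_mulVec]
  have first_bound : Complex.normSq (star a ⬝ᵥ A *ᵥ b) ≤ s * ∑ j, Complex.normSq (b j) := by
    rw [adjoint]
    exact normSq_star_dotProduct_le _ _
  have second_bound : s ^ 2 ≤ (∑ i, ∑ j, Complex.normSq ((A * Aᴴ) i j)) *
      (∑ i, Complex.normSq (a i)) ^ 2 := by
    calc s ^ 2 = Complex.normSq (star a ⬝ᵥ (A * Aᴴ) *ᵥ a) := by
          rw [← mulVec_mulVec, adjoint, star_dotProduct_self_eq_sum_normSq,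
            Complex.normSq_ofReal, sq]
      _ ≤ (∑ i, Complex.normSq (a i)) * ∑ i, Complex.normSq (((A * Aᴴ) *ᵥ a) i) :=
          normSq_star_dotProduct_le _ _
      _ ≤ (∑ i, Complex.normSq (a i)) *
          ((∑ i, ∑ j, Complex.normSq ((A * Aᴴ) i j)) * ∑ i, Complex.normSq (a i)) := by
          gcongr
          · exact Finset.sum_nonneg fun i _ => Complex.normSq_nonneg _
          · exact sum_normSq_mulVec_le _ _
      _ = _ := by ring
  calc Complex.normSq (star a ⬝ᵥ A *ᵥ b) ^ 2 ≤ (s * ∑ j, Complex.normSq (b j)) ^ 2 :=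
        pow_le_pow_left₀ (Complex.normSq_nonneg _) first_bound 2
    _ = s ^ 2 * (∑ j, Complex.normSq (b j)) ^ 2 := mul_pow _ _ _
    _ ≤ _ := by gcongr

lemma re_star_dotProduct_mulVec_le_of_sum_norm_le {A : Matrix m m ℂ} (hA : A.IsHermitian)
    {c : ℝ} (hc : ∀ i, ∑ j, ‖A i j‖ ≤ c) (v : m → ℂ) :
    (star v ⬝ᵥ A *ᵥ v).re ≤ c * ∑ i, Complex.normSq (v i) := by
  have term_le (i j : m) : (star (v i) * (A i j * v j)).re ≤
      (‖A i j‖ * Complex.normSq (v i) + ‖A j i‖ * Complex.normSq (v j)) / 2 := by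
    have norm_symm : ‖A j i‖ = ‖A i j‖ := by rw [← hA.apply i j, norm_star]
    refine (Complex.re_le_norm _).trans ?_
    rw [norm_mul, norm_mul, norm_star, norm_symm, Complex.normSq_eq_norm_sq,
      Complex.normSq_eq_norm_sq]
    nlinarith [mul_nonneg (norm_nonneg (A i j)) (sq_nonneg (‖v i‖ - ‖v j‖))]
  calc (star v ⬝ᵥ A *ᵥ v).re = ∑ i, ∑ j, (star (v i) * (A i j * v j)).re := by
        simp only [dotProduct, mulVec, Finset.mul_sum, Complex.re_sum, Pi.star_apply]
    _ ≤ ∑ i, ∑ j, (‖A i j‖ * Complex.normSq (v i) + ‖A j i‖ * Complex.normSq (v j)) / 2 :=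
        Finset.sum_le_sum fun i _ => Finset.sum_le_sum fun j _ => term_le i j
    _ = ∑ i, (∑ j, ‖A i j‖) * Complex.normSq (v i) := by
        simp only [← Finset.sum_div, Finset.sum_add_distrib, Finset.sum_mul]
        rw [Finset.sum_comm (f := fun i j => ‖A j i‖ * Complex.normSq (v j)), add_self_div_two]
    _ ≤ c * ∑ i, Complex.normSq (v i) := by
        rw [Finset.mul_sum]
        exact Finset.sum_le_sum fun i _ =>
          mul_le_mul_of_nonneg_right (hc i) (Complex.normSq_nonneg _)

lemma re_star_dotProduct_mulVec_le_of_sq {A : Matrix m m ℂ} (hA : A.IsHermitian) {c : ℝ}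
    (hc : 0 < c) {v : m → ℂ}
    (h : (star v ⬝ᵥ (A * A) *ᵥ v).re ≤ c ^ 2 * ∑ i, Complex.normSq (v i)) :
    (star v ⬝ᵥ A *ᵥ v).re ≤ c * ∑ i, Complex.normSq (v i) := by
  have norm_sq_mulVec : ((∑ i, Complex.normSq ((A *ᵥ v) i) : ℝ) : ℂ) =
      star v ⬝ᵥ (A * A) *ᵥ v := by
    rw [← star_dotProduct_self_eq_sum_normSq, star_mulVec, hA.eq, ← dotProduct_mulVec,
      mulVec_mulVec]
  have amgm (i : m) : 2 * c * (star (v i) * (A *ᵥ v) i).re ≤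
      c ^ 2 * Complex.normSq (v i) + Complex.normSq ((A *ᵥ v) i) := by
    simp only [Complex.normSq_apply, RCLike.star_def, Complex.mul_re, Complex.conj_re,
      Complex.conj_im]
    nlinarith [sq_nonneg (c * (v i).re - ((A *ᵥ v) i).re),
      sq_nonneg (c * (v i).im - ((A *ᵥ v) i).im)]
  have sum_amgm := Finset.sum_le_sum fun i (_ : i ∈ Finset.univ) => amgm i
  rw [← Finset.mul_sum, Finset.sum_add_distrib, ← Finset.mul_sum, ← Complex.re_sum] at sum_amgm
  rw [← norm_sq_mulVec, Complex.ofReal_re] at h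
  change 2 * c * (star v ⬝ᵥ A *ᵥ v).re ≤ _ at sum_amgm
  nlinarith

lemma star_dotProduct_mul_mulVec_of_fixed {R : Type*} [NonUnitalSemiring R] [StarRing R]
    {A B : Matrix m m R} (hA : A.IsHermitian) {v : m → R} (hv : A *ᵥ v = v) (w : m → R) :
    star v ⬝ᵥ (A * B) *ᵥ w = star v ⬝ᵥ B *ᵥ w := by
  conv_rhs => rw [← hv, star_mulVec, hA.eq, ← dotProduct_mulVec, mulVec_mulVec]

end

section

variable {ι k l m n R : Type*} [Fintype ι]

/-- The site-wise tensor product `⨂ i, M i`, as a matrix indexed by configurations `ι → m` and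
`ι → n`. -/
def piKronecker [CommMonoid R] (M : ι → Matrix m n R) : Matrix (ι → m) (ι → n) R :=
  of fun p q => ∏ i, M i (p i) (q i)

@[simp]
lemma piKronecker_apply [CommMonoid R] (M : ι → Matrix m n R) (p : ι → m) (q : ι → n) :
    piKronecker M p q = ∏ i, M i (p i) (q i) :=
  rfl

lemma piKronecker_mul [CommSemiring R] [DecidableEq ι] [Fintype m]
    (M : ι → Matrix l m R) (N : ι → Matrix m n R) :
    piKronecker (fun i => M i * N i) = piKronecker M * piKronecker N := by
  ext p q
  simp only [mul_apply, piKronecker_apply, Fintype.prod_sum, Finset.prod_mul_distrib]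

lemma piKronecker_sum [CommSemiring R] [DecidableEq ι] [Fintype k] (M : k → Matrix m n R) :
    piKronecker (fun _ : ι => ∑ j, M j) = ∑ f : ι → k, piKronecker fun i => M (f i) := by
  ext p q
  simp only [Matrix.sum_apply, piKronecker_apply, Fintype.prod_sum]

lemma piKronecker_smul [CommMonoid R] (c : R) (M : ι → Matrix m n R) :
    piKronecker (fun i => c • M i) = c ^ Fintype.card ι • piKronecker M := by
  ext p q
  simp [Finset.prod_mul_distrib]

lemma piKronecker_single_one [CommSemiring R] [DecidableEq m] [DecidableEq n]
    (p : ι → m) (q : ι → n) :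
    piKronecker (fun i => single (p i) (q i) (1 : R)) = single p q 1 := by
  ext p' q'
  simp [single_apply, Fintype.prod_boole, funext_iff, forall_and]

lemma piKronecker_one [CommSemiring R] [DecidableEq m] :
    piKronecker (fun _ : ι => (1 : Matrix m m R)) = 1 := by
  ext p q
  simp [one_apply, Fintype.prod_boole, funext_iff]

lemma conjTranspose_piKronecker [CommSemiring R] [StarRing R] (M : ι → Matrix m n R) :
    (piKronecker M)ᴴ = piKronecker fun i => (M i)ᴴ := by
  ext p q
  simp [star_prod]

lemma isHermitian_piKronecker [CommSemiring R] [StarRing R] {M : ι → Matrix m m R}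
    (hM : ∀ i, (M i).IsHermitian) :
    (piKronecker M).IsHermitian := by
  rw [IsHermitian, conjTranspose_piKronecker]
  simp only [(hM _).eq]

lemma sum_norm_piKronecker_le [DecidableEq ι] [NormedField R] [Fintype n] {M : ι → Matrix m n R}
    {c : ℝ} (hM : ∀ i j, ∑ k, ‖M i j k‖ ≤ c) (p : ι → m) :
    ∑ q, ‖piKronecker M p q‖ ≤ c ^ Fintype.card ι := by
  simp only [piKronecker_apply, norm_prod]
  rw [← Fintype.prod_sum fun i k => ‖M i (p i) k‖]
  exact (Finset.prod_le_prod (fun i _ => Finset.sum_nonneg fun k _ => norm_nonneg _)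
    fun i _ => hM i (p i)).trans_eq (by rw [Finset.prod_const, Finset.card_univ])

lemma piKronecker_kronecker [CommSemiring R] (A : ι → Matrix k m R) (B : ι → Matrix l n R) :
    piKronecker (fun i => A i ⊗ₖ B i) = (piKronecker A ⊗ₖ piKronecker B).submatrix
      (Equiv.arrowProdEquivProdArrow ι _ _) (Equiv.arrowProdEquivProdArrow ι _ _) := by
  ext p q
  simp [Finset.prod_mul_distrib, Equiv.arrowProdEquivProdArrow]

end

section

variable {ι k l m n R : Type*} [Fintype ι] [DecidableEq ι] [Fintype m] [Fintype n]

/-- The product vector `a ⊗ b`, with its tensor factors reordered so that each site `i` carries the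
`i`-th factor of `a` together with the `i`-th factor of `b`. -/
def siteTensor {ι m n R : Type*} [Mul R] (a : (ι → m) → R) (b : (ι → n) → R) : (ι → m × n) → R :=
  fun w => a (fun i => (w i).1) * b (fun i => (w i).2)

lemma sum_siteTensor [CommSemiring R] (a : (ι → m) → R) (b : (ι → n) → R) :
    ∑ w, siteTensor a b w = (∑ x, a x) * ∑ y, b y := by
  rw [Finset.sum_mul_sum, ← Fintype.sum_prod_type',
    ← (Equiv.arrowProdEquivProdArrow ι _ _).sum_comp]
  rfl

lemma sum_normSq_siteTensor (a : (ι → m) → ℂ) (b : (ι → n) → ℂ) :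
    ∑ w, Complex.normSq (siteTensor a b w) =
      (∑ x, Complex.normSq (a x)) * ∑ y, Complex.normSq (b y) := by
  rw [← sum_siteTensor]
  exact Finset.sum_congr rfl fun w _ => Complex.normSq_mul _ _

lemma piKronecker_kronecker_mulVec_siteTensor [CommSemiring R] (A : ι → Matrix k m R)
    (B : ι → Matrix l n R) (a : (ι → m) → R) (b : (ι → n) → R) :
    piKronecker (fun i => A i ⊗ₖ B i) *ᵥ siteTensor a b =
      siteTensor (piKronecker A *ᵥ a) (piKronecker B *ᵥ b) := by
  ext p
  refine Eq.trans (Finset.sum_congr rfl fun w _ => ?_) (sum_siteTensor _ _)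
  simp only [piKronecker_apply, kroneckerMap_apply, Finset.prod_mul_distrib, siteTensor]
  ring

lemma star_siteTensor_dotProduct_siteTensor [CommSemiring R] [StarRing R]
    (a a' : (ι → m) → R) (b b' : (ι → n) → R) :
    star (siteTensor a b) ⬝ᵥ siteTensor a' b' = (star a ⬝ᵥ a') * (star b ⬝ᵥ b') := by
  refine Eq.trans (Finset.sum_congr rfl fun w _ => ?_) (sum_siteTensor _ _)
  simp only [Pi.star_apply, siteTensor, star_mul']
  ring

/-- The coefficient matrix of `η ∈ (R^m ⊗ R^n)^{⊗ι}` across the cut that groups the first factors of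
all sites on one side and the second factors on the other. -/
def coeffMatrix {ι m n R : Type*} (η : (ι → m × n) → R) : Matrix (ι → m) (ι → n) R :=
  of fun x y => η fun i => (x i, y i)

lemma star_siteTensor_dotProduct [CommSemiring R] [StarRing R] (η : (ι → m × n) → R)
    (a : (ι → m) → R) (b : (ι → n) → R) :
    star (siteTensor a b) ⬝ᵥ η = star a ⬝ᵥ coeffMatrix η *ᵥ star b := by
  simp only [dotProduct, mulVec, Finset.mul_sum]
  rw [← Fintype.sum_prod_type', ← (Equiv.arrowProdEquivProdArrow ι _ _).sum_comp]
  refine Finset.sum_congr rfl fun w _ => ?_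
  change star (a _ * b _) * η w = star (a fun i => (w i).1) * (η w * star (b fun i => (w i).2))
  rw [star_mul']
  ring

lemma kronecker_mulVec [CommSemiring R] (A : Matrix k m R) (B : Matrix l n R) (f : m × n → R)
    (p : k × l) :
    ((A ⊗ₖ B) *ᵥ f) p = (A *ᵥ fun i => (B *ᵥ fun j => f (i, j)) p.2) p.1 := by
  simp only [mulVec, dotProduct, kroneckerMap_apply, Fintype.sum_prod_type, Finset.mul_sum,
    mul_assoc]

lemma star_dotProduct_single_kronecker_one_mulVec [CommSemiring R] [StarRing R] [DecidableEq m]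
    [DecidableEq n] (A : Matrix m n R) (x x' : m) :
    (star fun p : m × n => A p.1 p.2) ⬝ᵥ (single x x' 1 ⊗ₖ 1) *ᵥ (fun p => A p.1 p.2) =
      (A * Aᴴ) x' x := by
  have mulVec_eq (p : m × n) :
      ((single x x' (1 : R) ⊗ₖ 1) *ᵥ fun p => A p.1 p.2) p = if p.1 = x then A x' p.2 else 0 := by
    simp [kronecker_mulVec, single_mulVec, Function.update_apply]
  simp only [dotProduct, mulVec_eq, Pi.star_apply, mul_ite, mul_zero, Fintype.sum_prod_type_right,
    Matrix.mul_apply, conjTranspose_apply, Finset.sum_ite_eq', Finset.mem_univ, if_true,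
    mul_comm (A x' _)]

lemma star_dotProduct_piKronecker_single_mulVec [CommSemiring R] [StarRing R] [DecidableEq m]
    [DecidableEq n] (η : (ι → m × n) → R) (x x' : ι → m) :
    star η ⬝ᵥ piKronecker (fun i => single (x i) (x' i) 1 ⊗ₖ 1) *ᵥ η =
      (coeffMatrix η * (coeffMatrix η)ᴴ) x' x := by
  rw [← star_dotProduct_single_kronecker_one_mulVec, piKronecker_kronecker,
    piKronecker_single_one, piKronecker_one, submatrix_mulVec_equiv, ← comp_equiv_symm_dotProduct]
  rfl

end

variable {ι α β : Type*}

lemma isHermitian_permMatrix {m R : Type*} [DecidableEq m] [NonAssocSemiring R] [StarRing R]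
    {σ : Equiv.Perm m} (hσ : σ⁻¹ = σ) :
    (σ.permMatrix R).IsHermitian := by
  rw [IsHermitian, conjTranspose_permMatrix, hσ]

lemma sum_norm_smul_one_add_smul_permMatrix_le {m : Type*} [Fintype m] [DecidableEq m] (s t : ℂ)
    (σ : Equiv.Perm m) (i : m) :
    ∑ j, ‖(s • (1 : Matrix m m ℂ) + t • σ.permMatrix ℂ) i j‖ ≤ ‖s‖ + ‖t‖ := by
  have sum_norm (τ : Equiv.Perm m) (u : ℂ) : ∑ j, ‖(u • τ.permMatrix ℂ) i j‖ = ‖u‖ := by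
    simp [PEquiv.toMatrix_apply, apply_ite]
  rw [← Matrix.permMatrix_one, ← sum_norm 1 s, ← sum_norm σ t, ← Finset.sum_add_distrib]
  exact Finset.sum_le_sum fun j _ => norm_add_le _ _

lemma asymProj_eq_half_smul (d : ℕ) :
    asymProj d = (1 / 2 : ℂ) • (1 - Equiv.Perm.permMatrix ℂ (Equiv.prodComm (Fin d) (Fin d))) := by
  ext p q
  simp [asymProj, Matrix.one_apply, PEquiv.toMatrix_apply, Prod.ext_iff, and_comm, eq_comm]

lemma isHermitian_asymProj (d : ℕ) : (asymProj d).IsHermitian := by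
  ext p q
  simp [asymProj, and_comm, eq_comm]

lemma asymProj_mulVec {d : ℕ} (f : Fin d × Fin d → ℂ) (p : Fin d × Fin d) :
    (asymProj d *ᵥ f) p = (1 / 2) * (f p - f p.swap) := by
  rw [asymProj_eq_half_smul, smul_mulVec, sub_mulVec, one_mulVec, permMatrix_mulVec]
  rfl

lemma asymProj_mul_self (d : ℕ) : asymProj d * asymProj d = asymProj d := by
  rw [ext_iff_mulVec]
  intro f
  ext p
  simp only [← mulVec_mulVec, asymProj_mulVec, Prod.swap_swap]
  ring

/-- The permutation `F` of `(α × β) × (α × β)` exchanging the two `α` components. -/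
def swapFst (α β : Type*) : Equiv.Perm ((α × β) × (α × β)) where
  toFun p := ((p.2.1, p.1.2), (p.1.1, p.2.2))
  invFun p := ((p.2.1, p.1.2), (p.1.1, p.2.2))
  left_inv _ := rfl
  right_inv _ := rfl

/-- The operator `1 + 4F`. The weight `4` is chosen so that its compression to `∧² ⊗ ∧²` has
all its eigenvalues among `-3`, `1` and `3`; see `compress_shiftedSwap_mul_self`. -/
def shiftedSwap (α β : Type*) [DecidableEq α] [DecidableEq β] :
    Matrix ((α × β) × (α × β)) ((α × β) × (α × β)) ℂ :=
  1 + (4 : ℂ) • (swapFst α β).permMatrix ℂ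

lemma isHermitian_shiftedSwap [DecidableEq α] [DecidableEq β] : (shiftedSwap α β).IsHermitian :=
  isHermitian_one.add ((isHermitian_permMatrix rfl).smul (.ofNat 4))

/-- The operators `T` with `shiftedSwap α β = ∑ k, T k ⊗ (T k)ᴴ`: the identity, and twice the matrix
units of the first factor. -/
def swapFactor [DecidableEq α] [DecidableEq β] : Option (α × α) → Matrix (α × β) (α × β) ℂ
  | none => 1
  | some p => (2 : ℂ) • (single p.1 p.2 1 ⊗ₖ 1)

lemma permMatrix_swapFst [Fintype α] [DecidableEq α] [DecidableEq β] : (swapFst α β).permMatrix ℂ =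
    ∑ p : α × α, (single p.1 p.2 1 ⊗ₖ 1) ⊗ₖ (single p.2 p.1 1 ⊗ₖ 1) := by
  ext ⟨⟨a, b⟩, ⟨c, e⟩⟩ ⟨⟨a', b'⟩, ⟨c', e'⟩⟩
  simp only [swapFst, PEquiv.toMatrix_apply, Equiv.toPEquiv_apply, Equiv.coe_fn_mk,
    Option.mem_def, Option.some.injEq, Prod.mk.injEq, ite_and, Matrix.sum_apply,
    kroneckerMap_apply, single_apply, one_apply, mul_ite, mul_one, mul_zero, Finset.sum_ite_irrel,
    Fintype.sum_prod_type, Finset.sum_ite_eq', Finset.mem_univ, ↓reduceIte,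
    Finset.sum_const_zero]
  grind

lemma shiftedSwap_eq_sum [Fintype α] [DecidableEq α] [DecidableEq β] :
    shiftedSwap α β = ∑ k, swapFactor k ⊗ₖ (swapFactor k)ᴴ := by
  simp only [shiftedSwap, Fintype.sum_option, swapFactor, conjTranspose_one, one_kronecker_one,
    conjTranspose_smul, conjTranspose_kronecker, conjTranspose_single, star_one, smul_kronecker,
    kronecker_smul, smul_smul, permMatrix_swapFst, Finset.smul_sum, RCLike.star_def,
    Complex.conj_ofNat]
  norm_num

/- The irreducible constituents of `∧² ⊗ ∧²` are `∧⁴`, `S_(2,2)` and `S_(2,1,1)`; on them the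
compression `QLQ` equals `-3`, `3` and `1`, and the exchange of the two copies `1`, `1` and `-1`. -/
lemma compress_shiftedSwap_mul_self (d : ℕ) :
    let Q := asymProj d ⊗ₖ asymProj d
    let L := shiftedSwap (Fin d) (Fin d)
    (Q * L * Q) * (Q * L * Q) =
      Q * ((5 : ℂ) • 1 + (4 : ℂ) • Equiv.Perm.permMatrix ℂ (Equiv.prodComm _ _)) := by
  intro Q L
  have Q_mulVec (f) (a b c e : Fin d) : (Q *ᵥ f) ((a, b), (c, e)) =
      (1 / 4) * (f ((a, b), (c, e)) - f ((b, a), (c, e)) - f ((a, b), (e, c)) +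
        f ((b, a), (e, c))) := by
    simp only [Q, kronecker_mulVec, asymProj_mulVec, Prod.swap]
    ring
  have L_mulVec (f) (a b c e : Fin d) :
      (L *ᵥ f) ((a, b), (c, e)) = f ((a, b), (c, e)) + 4 * f ((c, b), (a, e)) := by
    simp only [L, shiftedSwap, add_mulVec, smul_mulVec, one_mulVec, permMatrix_mulVec]
    rfl
  rw [ext_iff_mulVec]
  intro f
  ext ⟨⟨a, b⟩, ⟨c, e⟩⟩
  simp only [← mulVec_mulVec, Q_mulVec, L_mulVec, add_mulVec, smul_mulVec, one_mulVec,
    permMatrix_mulVec, Pi.add_apply, Pi.smul_apply, Function.comp, Equiv.prodComm_apply, Prod.swap,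
    smul_eq_mul]
  ring

lemma re_star_dotProduct_piKronecker_shiftedSwap_le [Fintype ι] [DecidableEq ι] {d : ℕ}
    {v : (ι → (Fin d × Fin d) × (Fin d × Fin d)) → ℂ}
    (hv : piKronecker (fun _ => asymProj d ⊗ₖ asymProj d) *ᵥ v = v) :
    (star v ⬝ᵥ piKronecker (fun _ => shiftedSwap (Fin d) (Fin d)) *ᵥ v).re ≤
      3 ^ Fintype.card ι * ∑ w, Complex.normSq (v w) := by
  set Q := asymProj d ⊗ₖ asymProj d with hQ
  set L := shiftedSwap (Fin d) (Fin d)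
  set W : Matrix ((Fin d × Fin d) × (Fin d × Fin d)) ((Fin d × Fin d) × (Fin d × Fin d)) ℂ :=
    (5 : ℂ) • 1 + (4 : ℂ) • Equiv.Perm.permMatrix ℂ (Equiv.prodComm _ _)
  have hermitian_Q : Q.IsHermitian := by
    rw [IsHermitian, hQ, conjTranspose_kronecker, isHermitian_asymProj]
  have hermitian_compress : (Q * L * Q).IsHermitian := by
    simpa only [hermitian_Q.eq] using isHermitian_conjTranspose_mul_mul Q isHermitian_shiftedSwap
  have hermitian_W : W.IsHermitian :=
    (isHermitian_one.smul (.ofNat 5)).add ((isHermitian_permMatrix rfl).smul (.ofNat 4))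
  have norm_W (p) : ∑ q, ‖W p q‖ ≤ 9 :=
    (sum_norm_smul_one_add_smul_permMatrix_le 5 4 _ p).trans_eq (by norm_num)
  have drop_Q (M : Matrix _ _ ℂ) : star v ⬝ᵥ piKronecker (fun _ => Q * M) *ᵥ v =
      star v ⬝ᵥ piKronecker (fun _ => M) *ᵥ v := by
    rw [piKronecker_mul]
    exact star_dotProduct_mul_mulVec_of_fixed (isHermitian_piKronecker fun _ => hermitian_Q) hv v
  have compress : star v ⬝ᵥ piKronecker (fun _ => L) *ᵥ v =
      star v ⬝ᵥ piKronecker (fun _ => Q * L * Q) *ᵥ v := by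
    rw [piKronecker_mul, ← mulVec_mulVec, hv, drop_Q]
  have compress_sq : star v ⬝ᵥ piKronecker (fun _ => W) *ᵥ v =
      star v ⬝ᵥ (piKronecker (fun _ => Q * L * Q) * piKronecker (fun _ => Q * L * Q)) *ᵥ v := by
    rw [← piKronecker_mul, compress_shiftedSwap_mul_self, drop_Q]
  rw [compress]
  refine re_star_dotProduct_mulVec_le_of_sq
    (isHermitian_piKronecker fun _ => hermitian_compress) (by positivity) ?_
  rw [← compress_sq, ← pow_mul, mul_comm (Fintype.card ι), pow_mul,
    show (3 : ℝ) ^ 2 = 9 by norm_num]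
  exact re_star_dotProduct_mulVec_le_of_sum_norm_le
    (isHermitian_piKronecker fun _ => hermitian_W) (sum_norm_piKronecker_le fun _ => norm_W) v

lemma star_siteTensor_self_dotProduct_piKronecker_shiftedSwap [Fintype ι] [DecidableEq ι]
    [Fintype α] [Fintype β] [DecidableEq α] [DecidableEq β] (η : (ι → α × β) → ℂ) :
    star (siteTensor η η) ⬝ᵥ piKronecker (fun _ => shiftedSwap α β) *ᵥ siteTensor η η =
      ((∑ k : ι → Option (α × α), Complex.normSq
        (star η ⬝ᵥ piKronecker (fun i => swapFactor (k i)) *ᵥ η) : ℝ) : ℂ) := by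
  rw [shiftedSwap_eq_sum, piKronecker_sum, sum_mulVec, dotProduct_sum, Complex.ofReal_sum]
  refine Finset.sum_congr rfl fun k _ => ?_
  rw [piKronecker_kronecker_mulVec_siteTensor, star_siteTensor_dotProduct_siteTensor,
    ← conjTranspose_piKronecker, Complex.normSq_eq_conj_mul_self, mul_comm]
  congr 1
  rw [← RCLike.star_def, ← star_dotProduct, star_mulVec, ← dotProduct_mulVec]

lemma sum_normSq_coeffMatrix_le [Fintype ι] [DecidableEq ι] {d : ℕ}
    {η : (ι → Fin d × Fin d) → ℂ} (hη : piKronecker (fun _ => asymProj d) *ᵥ η = η) :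
    4 ^ Fintype.card ι *
        ∑ x, ∑ x', Complex.normSq ((coeffMatrix η * (coeffMatrix η)ᴴ) x x') ≤
      3 ^ Fintype.card ι * (∑ w, Complex.normSq (η w)) ^ 2 := by
  let f (k : ι → Option (Fin d × Fin d)) : ℝ :=
    Complex.normSq (star η ⬝ᵥ piKronecker (fun i => swapFactor (k i)) *ᵥ η)
  have some_terms (x x' : ι → Fin d) :
      f (fun i => some (x' i, x i)) =
        4 ^ Fintype.card ι * Complex.normSq ((coeffMatrix η * (coeffMatrix η)ᴴ) x x') := by
    simp only [f, swapFactor]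
    rw [piKronecker_smul, smul_mulVec, dotProduct_smul, smul_eq_mul, Complex.normSq_mul,
      star_dotProduct_piKronecker_single_mulVec, map_pow]
    norm_num
  have some_injective : Function.Injective
      (fun (p : (ι → Fin d) × (ι → Fin d)) i => some (p.2 i, p.1 i)) := by
    intro p q h
    simpa [funext_iff, Prod.ext_iff, forall_and, and_comm] using h
  have fixed : piKronecker (fun _ => asymProj d ⊗ₖ asymProj d) *ᵥ siteTensor η η =
      siteTensor η η := by
    rw [piKronecker_kronecker_mulVec_siteTensor, hη]
  calc _ = ∑ p : (ι → Fin d) × (ι → Fin d), f fun i => some (p.2 i, p.1 i) := by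
        simp only [some_terms, Fintype.sum_prod_type, Finset.mul_sum]
    _ ≤ ∑ k, f k := by
        rw [← Finset.sum_image some_injective.injOn]
        exact Finset.sum_le_univ_sum_of_nonneg fun k => Complex.normSq_nonneg _
    _ = (star (siteTensor η η) ⬝ᵥ
          piKronecker (fun _ => shiftedSwap (Fin d) (Fin d)) *ᵥ siteTensor η η).re := by
        rw [star_siteTensor_self_dotProduct_piKronecker_shiftedSwap, Complex.ofReal_re]
    _ ≤ 3 ^ Fintype.card ι * ∑ w, Complex.normSq (siteTensor η η w) :=
        re_star_dotProduct_piKronecker_shiftedSwap_le fixed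
    _ = _ := by rw [sum_normSq_siteTensor, sq]

lemma re_siteTensor_overlap_asymProj_sq_le [Fintype ι] [DecidableEq ι] {d : ℕ}
    (a b : (ι → Fin d) → ℂ) :
    (star (siteTensor a b) ⬝ᵥ piKronecker (fun _ => asymProj d) *ᵥ siteTensor a b).re ^ 2 ≤
      (3 / 4) ^ Fintype.card ι *
        ((∑ x, Complex.normSq (a x)) ^ 2 * (∑ y, Complex.normSq (b y)) ^ 2) := by
  set P : Matrix (ι → Fin d × Fin d) (ι → Fin d × Fin d) ℂ := piKronecker fun _ => asymProj d
  set η := P *ᵥ siteTensor a b with hη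
  set A := ∑ x, Complex.normSq (a x)
  set B := ∑ y, Complex.normSq (b y)
  set N := ∑ w, Complex.normSq (η w)
  set purity := ∑ x, ∑ x', Complex.normSq ((coeffMatrix η * (coeffMatrix η)ᴴ) x x')
  have hermitian_P : P.IsHermitian := isHermitian_piKronecker fun _ => isHermitian_asymProj d
  have fixed : P *ᵥ η = η := by
    rw [hη, mulVec_mulVec, ← piKronecker_mul, asymProj_mul_self]
  have overlap_eq : star (siteTensor a b) ⬝ᵥ η = (N : ℂ) := by
    rw [← star_dotProduct_self_eq_sum_normSq]
    conv_rhs => enter [1]; rw [hη, star_mulVec, hermitian_P.eq]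
    rw [← dotProduct_mulVec, fixed]
  have quartic : N ^ 4 ≤ purity * A ^ 2 * B ^ 2 := by
    have h := normSq_star_dotProduct_mulVec_sq_le (coeffMatrix η) a (star b)
    rw [← star_siteTensor_dotProduct, overlap_eq, Complex.normSq_ofReal, ← pow_two, ← pow_mul] at h
    simpa only [Pi.star_apply, RCLike.star_def, Complex.normSq_conj] using h
  have scaled : 4 ^ Fintype.card ι * N ^ 4 ≤ 3 ^ Fintype.card ι * N ^ 2 * (A ^ 2 * B ^ 2) := by
    calc _ ≤ 4 ^ Fintype.card ι * (purity * A ^ 2 * B ^ 2) := by gcongr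
      _ = 4 ^ Fintype.card ι * purity * (A ^ 2 * B ^ 2) := by ring
      _ ≤ _ := mul_le_mul_of_nonneg_right (sum_normSq_coeffMatrix_le fixed) (by positivity)
  rw [overlap_eq, Complex.ofReal_re, div_pow, div_mul_eq_mul_div, le_div_iff₀ (by positivity)]
  rcases eq_or_ne N 0 with hN | hN
  · rw [hN, zero_pow two_ne_zero, zero_mul]
    positivity
  · refine le_of_mul_le_mul_right ?_ (by positivity : 0 < N ^ 2)
    linarith

lemma star_dotProduct_asymPow_mulVec (d n : ℕ) (a b : (Fin n → Fin d) → ℂ) :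
    (star fun p : (Fin n → Fin d) × (Fin n → Fin d) => a p.1 * b p.2) ⬝ᵥ
        asymPow d n *ᵥ (fun p => a p.1 * b p.2) =
      star (siteTensor a b) ⬝ᵥ piKronecker (fun _ => asymProj d) *ᵥ siteTensor a b := by
  have h : asymPow d n = (piKronecker fun _ => asymProj d).submatrix
      (Equiv.arrowProdEquivProdArrow _ _ _).symm (Equiv.arrowProdEquivProdArrow _ _ _).symm := rfl
  rw [h, submatrix_mulVec_equiv, ← comp_equiv_symm_dotProduct]
  rfl

end

/-- for all unit vectors `α, β ∈ (ℂ^d)^{⊗n}`,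
`⟨α⊗β| (P₂^{(d)})^{⊗n} |α⊗β⟩ ≤ (3/4)^{n/2}`. -/
theorem product_overlap_asymPow_le (d n : ℕ) (hd : 2 ≤ d) (hn : 1 ≤ n)
    (a b : (Fin n → Fin d) → ℂ)
    (ha : ∑ v, Complex.normSq (a v) = 1) (hb : ∑ v, Complex.normSq (b v) = 1) :
    (dotProduct
        (star fun p : (Fin n → Fin d) × (Fin n → Fin d) => a p.1 * b p.2)
        ((asymPow d n).mulVec
          fun p : (Fin n → Fin d) × (Fin n → Fin d) => a p.1 * b p.2)).re
      ≤ Real.sqrt ((3 / 4 : ℝ) ^ n) := by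
  apply Real.le_sqrt_of_sq_le
  rw [star_dotProduct_asymPow_mulVec]
  simpa only [ha, hb, one_pow, mul_one, Fintype.card_fin] using
    re_siteTensor_overlap_asymProj_sq_le a b

end
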